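/- Let s be a complex number with Re(s) > 1 and let y > 0. Then ∫₀¹ E(s, x + iy) dx = y^s + φ̂(s)·y^{1−s}, where E(s, z) = (1/2) · Σ_{(c,d) ∈ ℤ², gcd(c,d)=1} (Im z)^s / |cz + d|^{2s} is the real-analytic Eisenstein series for SL(2,ℤ) and φ̂(s) = √π · Γ(s−1/2)/Γ(s) · ζ(2s−1)/ζ(2s), with ζ the Riemann zeta function and Γ the Gamma function. -/

import Mathlib

open Complex

/-- The real-analytic Eisenstein series
`E(s, z) = (1/2) Σ_{(c,d) coprime} (Im z)^s / |cz + d|^{2s}`. -/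
noncomputable def eisenstein (s : ℂ) (z : ℂ) : ℂ :=
  (1 / 2) * ∑' p : ℤ × ℤ,
    if Int.gcd p.1 p.2 = 1 then
      ((z.im : ℂ) ^ s) / ((‖(p.1 : ℂ) * z + (p.2 : ℂ)‖ : ℂ) ^ (2 * s))
    else 0

/-- The scattering function `φ̂(s) = √π · Γ(s−1/2)/Γ(s) · ζ(2s−1)/ζ(2s)`. -/
noncomputable def phiHat (s : ℂ) : ℂ :=
  (Real.sqrt Real.pi : ℂ) * (Complex.Gamma (s - 1 / 2) / Complex.Gamma s) *
    (riemannZeta (2 * s - 1) / riemannZeta (2 * s))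

/-!
Multiplying `E(s, z)` by `ζ(2s)` turns the sum over coprime pairs into the sum of
`(Im z) ^ s * |cz + d| ^ (-2s)` over all nonzero pairs `(c, d)`, which may be integrated term by
term. The terms with `c = 0` give `2 ζ(2s) y ^ s`. For fixed `c ≠ 0`, the substitutions
`u = cx + d`, `d ∈ ℤ`, cover the line `|c|` times and scale the measure by `1 / |c|`, so the
integrals of `|cz + d| ^ (-2s)` add up to `∫ (c²y² + u²) ^ (-s) du`, a multiple of
`|c| ^ (1 - 2s)`; the constant comes from writing `Γ(s) (c²y² + u²) ^ (-s)` as a Gamma integral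
and integrating the resulting Gaussian in `u` first. Summing over `c` produces `ζ(2s - 1)`.
-/

section GammaGaussian

open MeasureTheory Set

variable {V : Type*} [NormedAddCommGroup V] {b : ℝ} {s : ℂ}

/-- The integrand `r ^ (s - 1) e ^ {-(b + ‖v‖²) r}` of the Gamma integral for
`Γ(s) (b + ‖v‖²) ^ (-s)`: a power of `r` when `v` is fixed, a Gaussian in `v` when `r` is fixed. -/
noncomputable def gammaGaussian (b : ℝ) (s : ℂ) (v : V) (r : ℝ) : ℂ :=
  (r : ℂ) ^ (s - 1) * cexp (-((b + ‖v‖ ^ 2 : ℝ) * r))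

theorem integral_Ioi_gammaGaussian (hb : 0 < b) (hs : 0 < s.re) (v : V) :
    ∫ r in Ioi (0 : ℝ), gammaGaussian b s v r =
      ((b + ‖v‖ ^ 2 : ℝ) : ℂ) ^ (-s) * Complex.Gamma s := by
  have hbv : 0 < b + ‖v‖ ^ 2 := by positivity
  rw [cpow_neg, ← inv_cpow_ofReal_nonneg hbv.le, ← one_div]
  exact integral_cpow_mul_exp_neg_mul_Ioi hs hbv

theorem gammaGaussian_eq_mul_gaussian (b : ℝ) (s : ℂ) (v : V) (r : ℝ) :
    gammaGaussian b s v r =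
      (r : ℂ) ^ (s - 1) * cexp (-(b * r)) * (Real.exp (-r * ‖v‖ ^ 2) : ℝ) := by
  rw [gammaGaussian, mul_assoc, ofReal_exp, ← Complex.exp_add]
  congr 2
  push_cast
  ring

theorem norm_gammaGaussian (b : ℝ) (s : ℂ) (v : V) {r : ℝ} (hr : 0 < r) :
    ‖gammaGaussian b s v r‖ =
      r ^ (s.re - 1) * Real.exp (-b * r) * Real.exp (-r * ‖v‖ ^ 2) := by
  rw [gammaGaussian_eq_mul_gaussian, norm_mul, norm_mul, norm_cpow_eq_rpow_re_of_pos hr,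
    Complex.norm_exp, norm_real, Real.norm_of_nonneg (Real.exp_nonneg _)]
  simp

variable [InnerProductSpace ℝ V] [FiniteDimensional ℝ V] [MeasurableSpace V] [BorelSpace V]

theorem integrable_gaussian_norm_sq {r : ℝ} (hr : 0 < r) :
    Integrable fun v : V => Real.exp (-r * ‖v‖ ^ 2) := by
  have h := GaussianFourier.integrable_cexp_neg_mul_sq_norm_add (V := V)
    (b := (r : ℂ)) (by simpa using hr) 0 0
  simpa [Complex.norm_exp, ← ofReal_pow] using h.norm

theorem integral_gammaGaussian (b : ℝ) (s : ℂ) {r : ℝ} (hr : 0 < r) :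
    ∫ v : V, gammaGaussian b s v r =
      (Real.pi : ℂ) ^ (Module.finrank ℝ V / 2 : ℂ) *
        ((r : ℂ) ^ (s - Module.finrank ℝ V / 2 - 1) * cexp (-(b * r))) := by
  simp_rw [gammaGaussian_eq_mul_gaussian]
  rw [integral_const_mul, integral_complex_ofReal, GaussianFourier.integral_rexp_neg_mul_sq_norm hr,
    ofReal_cpow (by positivity), ofReal_div, div_eq_mul_inv, ← ofReal_inv,
    mul_cpow_ofReal_nonneg Real.pi_pos.le (by positivity), ofReal_inv,
    inv_cpow_ofReal_nonneg hr.le, sub_right_comm s, cpow_sub _ (_ / _) (by exact_mod_cast hr.ne')]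
  push_cast
  ring

theorem integral_norm_gammaGaussian (b : ℝ) (s : ℂ) {r : ℝ} (hr : 0 < r) :
    ∫ v : V, ‖gammaGaussian b s v r‖ =
      Real.pi ^ (Module.finrank ℝ V / 2 : ℝ) *
        (r ^ (s.re - Module.finrank ℝ V / 2 - 1) * Real.exp (-b * r)) := by
  simp_rw [norm_gammaGaussian b s _ hr]
  rw [integral_const_mul, GaussianFourier.integral_rexp_neg_mul_sq_norm hr,
    Real.div_rpow Real.pi_pos.le hr.le, sub_right_comm s.re,
    Real.rpow_sub hr _ (_ / _)]
  ring

theorem integrable_uncurry_gammaGaussian (hb : 0 < b) (hs : Module.finrank ℝ V / 2 < s.re) :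
    Integrable (Function.uncurry (gammaGaussian (V := V) b s))
      (volume.prod (volume.restrict (Ioi 0))) := by
  have hmeas : Measurable (Function.uncurry (gammaGaussian (V := V) b s)) := by
    unfold gammaGaussian Function.uncurry
    fun_prop
  refine (integrable_prod_iff' hmeas.aestronglyMeasurable).2 ⟨?_, ?_⟩
  · filter_upwards [ae_restrict_mem measurableSet_Ioi] with r hr
    simp only [Function.uncurry_apply_pair, gammaGaussian_eq_mul_gaussian]
    exact (integrable_gaussian_norm_sq hr).ofReal.const_mul _
  · have hint : IntegrableOn (fun r : ℝ => r ^ (s.re - Module.finrank ℝ V / 2 - 1) *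
        Real.exp (-b * r)) (Ioi 0) := by
      simpa using integrableOn_rpow_mul_exp_neg_mul_rpow (by linarith) one_pos hb
    refine (hint.const_mul (Real.pi ^ (Module.finrank ℝ V / 2 : ℝ))).congr ?_
    filter_upwards [ae_restrict_mem measurableSet_Ioi] with r hr
    exact (integral_norm_gammaGaussian b s hr).symm

theorem integrable_add_norm_sq_cpow_neg (hb : 0 < b) (hs : Module.finrank ℝ V / 2 < s.re) :
    Integrable fun v : V => ((b + ‖v‖ ^ 2 : ℝ) : ℂ) ^ (-s) := by
  have hs₀ : 0 < s.re := lt_of_le_of_lt (by positivity) hs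
  have h := (integrable_uncurry_gammaGaussian (V := V) hb hs).integral_prod_left
  simp only [Function.uncurry_apply_pair, integral_Ioi_gammaGaussian hb hs₀] at h
  exact (integrable_mul_const_iff (isUnit_iff_ne_zero.2 (Gamma_ne_zero_of_re_pos hs₀)) _).1 h

theorem integral_add_norm_sq_cpow_neg (hb : 0 < b) (hs : Module.finrank ℝ V / 2 < s.re) :
    ∫ v : V, ((b + ‖v‖ ^ 2 : ℝ) : ℂ) ^ (-s) =
      (Real.pi : ℂ) ^ (Module.finrank ℝ V / 2 : ℂ) *
        (Complex.Gamma (s - Module.finrank ℝ V / 2) / Complex.Gamma s) *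
        (b : ℂ) ^ (Module.finrank ℝ V / 2 - s) := by
  have hs₀ : 0 < s.re := lt_of_le_of_lt (by positivity) hs
  have hs₁ : 0 < (s - Module.finrank ℝ V / 2).re := by simpa using hs
  have hswap := integral_integral_swap (integrable_uncurry_gammaGaussian (V := V) hb hs)
  simp only [integral_Ioi_gammaGaussian hb hs₀] at hswap
  rw [setIntegral_congr_fun measurableSet_Ioi fun r hr => integral_gammaGaussian b s hr,
    integral_mul_const, integral_const_mul, integral_cpow_mul_exp_neg_mul_Ioi hs₁ hb,
    one_div, inv_cpow_ofReal_nonneg hb.le, ← cpow_neg, neg_sub] at hswap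
  rw [eq_div_of_mul_eq (Gamma_ne_zero_of_re_pos hs₀) hswap]
  ring

end GammaGaussian

open MeasureTheory in
theorem hasSum_intervalIntegral_comp_natCast_mul_add {E : Type*} [NormedAddCommGroup E]
    [NormedSpace ℝ E] {f : ℝ → E} (hf : Integrable f) {n : ℕ} (hn : n ≠ 0) :
    HasSum (fun d : ℤ => ∫ x in (0 : ℝ)..1, f (n * x + d)) (∫ u, f u) := by
  have hn' : (n : ℝ) ≠ 0 := Nat.cast_ne_zero.2 hn
  have hsplit (d : ℤ) : ∫ x in (0 : ℝ)..1, f (n * x + d) =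
      (n : ℝ)⁻¹ • ∑ k ∈ Finset.range n, ∫ x in (0 : ℝ)..1, f (x + (d + k : ℤ)) := by
    have hadj := intervalIntegral.sum_integral_adjacent_intervals (f := f)
      (a := fun k : ℕ => (k + d : ℝ)) (n := n) fun _ _ => hf.intervalIntegrable
    rw [intervalIntegral.integral_comp_mul_add _ hn', mul_zero, mul_one]
    simp only [intervalIntegral.integral_comp_add_right]
    simp only [Nat.cast_zero] at hadj
    rw [← hadj]
    congr 1
    refine Finset.sum_congr rfl fun k _ => ?_
    push_cast
    congr 1 <;> ring
  have hshift (k : ℕ) :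
      HasSum (fun d : ℤ => ∫ x in (0 : ℝ)..1, f (x + (d + k : ℤ))) (∫ u, f u) :=
    (Equiv.addRight (k : ℤ)).hasSum_iff.2 hf.hasSum_intervalIntegral_comp_add_int
  have hsum := (hasSum_sum (s := Finset.range n) fun k _ => hshift k).const_smul (n : ℝ)⁻¹
  simp only [← hsplit, Finset.sum_const, Finset.card_range, ← Nat.cast_smul_eq_nsmul ℝ,
    inv_smul_smul₀ hn'] at hsum
  exact hsum

/-- The pairs of coprime integers, that is, the primitive vectors of `ℤ²`. -/
abbrev PrimitivePair : Type := {p : ℤ × ℤ // Int.gcd p.1 p.2 = 1}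

theorem gcd_nsmul_primitivePair (n : ℕ) (p : PrimitivePair) :
    Int.gcd (n • (p : ℤ × ℤ)).1 (n • (p : ℤ × ℤ)).2 = n := by
  simp [Int.gcd_mul_left, p.2]

theorem pnat_smul_primitivePair_injective :
    Function.Injective fun q : ℕ+ × PrimitivePair => (q.1 : ℕ) • (q.2 : ℤ × ℤ) := by
  rintro ⟨n, p⟩ ⟨m, q⟩ (h : (n : ℕ) • (p : ℤ × ℤ) = (m : ℕ) • (q : ℤ × ℤ))
  obtain rfl : n = m := PNat.coe_injective <| by
    rw [← gcd_nsmul_primitivePair n p, h, gcd_nsmul_primitivePair]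
  obtain rfl : p = q := Subtype.ext (smul_right_injective _ n.ne_zero h)
  rfl

theorem exists_pnat_smul_primitivePair {p : ℤ × ℤ} (hp : p ≠ 0) :
    ∃ q : ℕ+ × PrimitivePair, (q.1 : ℕ) • (q.2 : ℤ × ℤ) = p := by
  have hgcd : 0 < Int.gcd p.1 p.2 := Nat.pos_of_ne_zero fun h =>
    hp (Prod.ext_iff.2 (Int.gcd_eq_zero_iff.1 h))
  obtain ⟨c, d, hcd, hc, hd⟩ := Int.exists_gcd_one hgcd
  refine ⟨⟨⟨_, hgcd⟩, ⟨(c, d), hcd⟩⟩, Prod.ext ?_ ?_⟩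
  · simpa [mul_comm] using hc.symm
  · simpa [mul_comm] using hd.symm

theorem tsum_pnat_cpow_neg_eq_riemannZeta {w : ℂ} (hw : 1 < w.re) :
    ∑' n : ℕ+, ((n : ℕ) : ℂ) ^ (-w) = riemannZeta w := by
  rw [zeta_eq_tsum_one_div_nat_add_one_cpow hw,
    tsum_pnat_eq_tsum_succ (f := fun n : ℕ => (n : ℂ) ^ (-w))]
  simp [cpow_neg]

theorem summable_norm_pnat_cpow_neg {w : ℂ} (hw : 1 < w.re) :
    Summable fun n : ℕ+ => ‖((n : ℕ) : ℂ) ^ (-w)‖ := by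
  simpa [Function.comp_def, cpow_neg] using
    (summable_one_div_nat_cpow.2 hw).norm.comp_injective PNat.coe_injective

theorem map_zero_of_homogeneous {M : Type*} [AddMonoid M] {f : M → ℂ} {w : ℂ}
    (hw : 0 < w.re) (hf : ∀ (n : ℕ+) (p : M), f ((n : ℕ) • p) = ((n : ℕ) : ℂ) ^ (-w) * f p) :
    f 0 = 0 := by
  have h2 : ‖(2 : ℂ) ^ (-w)‖ < 1 := by
    have := norm_natCast_cpow_of_pos two_pos (-w)
    rw [Nat.cast_ofNat] at this
    rw [this]
    exact Real.rpow_lt_one_of_one_lt_of_neg (by norm_num) (by simpa using hw)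
  have h := hf 2 0
  rw [smul_zero] at h
  by_contra h₀
  rw [PNat.val_ofNat, Nat.cast_ofNat, right_eq_mul₀ h₀] at h
  simp [h] at h2

theorem riemannZeta_mul_tsum_primitivePair {f : ℤ × ℤ → ℂ} {w : ℂ} (hw : 1 < w.re)
    (hsum : Summable f)
    (hf : ∀ (n : ℕ+) (p : ℤ × ℤ), f ((n : ℕ) • p) = ((n : ℕ) : ℂ) ^ (-w) * f p) :
    riemannZeta w * ∑' p : PrimitivePair, f p = ∑' p, f p := by
  have hsupp : f.support ⊆ Set.range fun q : ℕ+ × PrimitivePair => (q.1 : ℕ) • (q.2 : ℤ × ℤ) := by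
    refine fun p hp => exists_pnat_smul_primitivePair ?_
    rintro rfl
    exact hp (map_zero_of_homogeneous (by linarith) hf)
  rw [← tsum_pnat_cpow_neg_eq_riemannZeta hw, tsum_mul_tsum_of_summable_norm
    (summable_norm_pnat_cpow_neg hw) (hsum.norm.subtype _),
    ← pnat_smul_primitivePair_injective.tsum_eq hsupp]
  simp only [hf]

/-- The summand `|cz + d| ^ (-2s)` of the Epstein zeta function of the lattice `ℤz + ℤ`, where
`p = (c, d)`. It vanishes at `p = 0` for `s ≠ 0`, by the convention `0 ^ w = 0` for `w ≠ 0`. -/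
noncomputable def epsteinTerm (s z : ℂ) (p : ℤ × ℤ) : ℂ :=
  (‖(p.1 : ℂ) * z + p.2‖ : ℂ) ^ (-(2 * s))

section Epstein

open MeasureTheory

variable {s z : ℂ} {y : ℝ}

theorem epsteinTerm_neg (s z : ℂ) (p : ℤ × ℤ) : epsteinTerm s z (-p) = epsteinTerm s z p := by
  simp only [epsteinTerm, Prod.fst_neg, Prod.snd_neg, Int.cast_neg, neg_mul, ← neg_add, norm_neg]

theorem epsteinTerm_nsmul (s z : ℂ) (n : ℕ) (p : ℤ × ℤ) :
    epsteinTerm s z (n • p) = (n : ℂ) ^ (-(2 * s)) * epsteinTerm s z p := by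
  obtain ⟨c, d⟩ := p
  have h : ((n * c : ℤ) : ℂ) * z + (n * d : ℤ) = n * (c * z + d) := by
    push_cast
    ring
  simp only [epsteinTerm, Prod.smul_mk, nsmul_eq_mul]
  rw [h, norm_mul, Complex.norm_natCast, ofReal_mul,
    mul_cpow_ofReal_nonneg n.cast_nonneg (norm_nonneg _), ofReal_natCast]

theorem epsteinTerm_zero_natCast (s z : ℂ) (n : ℕ) :
    epsteinTerm s z (0, n) = (n : ℂ) ^ (-(2 * s)) := by
  simp [epsteinTerm]

theorem epsteinTerm_zero (hs : s ≠ 0) : epsteinTerm s z 0 = 0 := by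
  simp [epsteinTerm, hs]

theorem measurable_epsteinTerm (s : ℂ) (p : ℤ × ℤ) : Measurable fun z => epsteinTerm s z p := by
  unfold epsteinTerm
  fun_prop

theorem ofReal_cpow_two_mul {x : ℝ} (hx : 0 ≤ x) (w : ℂ) :
    (x : ℂ) ^ (2 * w) = ((x ^ 2 : ℝ) : ℂ) ^ w := by
  rw [cpow_ofNat_mul, sq, sq, ofReal_mul, mul_cpow_ofReal_nonneg hx hx]

theorem integral_sq_add_sq_cpow_neg {a : ℝ} (ha : 0 < a) (hs : 1 / 2 < s.re) :
    ∫ u : ℝ, ((a ^ 2 + ‖u‖ ^ 2 : ℝ) : ℂ) ^ (-s) =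
      (Real.sqrt Real.pi : ℂ) * (Complex.Gamma (s - 1 / 2) / Complex.Gamma s) *
        (a : ℂ) ^ (1 - 2 * s) := by
  have hs' : (Module.finrank ℝ ℝ / 2 : ℝ) < s.re := by simpa using hs
  rw [integral_add_norm_sq_cpow_neg (sq_pos_of_pos ha) hs', Module.finrank_self, Nat.cast_one,
    ← ofReal_cpow_two_mul ha.le, Real.sqrt_eq_rpow, ofReal_cpow Real.pi_pos.le]
  push_cast
  ring_nf

theorem epsteinTerm_eq_add_norm_sq_cpow (s : ℂ) (x y : ℝ) (c d : ℤ) :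
    epsteinTerm s (x + y * I) (c, d) =
      (((c * y) ^ 2 + ‖(c * x + d : ℝ)‖ ^ 2 : ℝ) : ℂ) ^ (-s) := by
  have h : (c : ℂ) * (x + y * I) + d = (c * x + d : ℝ) + (c * y : ℝ) * I := by
    push_cast
    ring
  rw [epsteinTerm, ← mul_neg, ofReal_cpow_two_mul (norm_nonneg _), h, Complex.sq_norm,
    normSq_add_mul_I, add_comm, Real.norm_eq_abs, sq_abs]

theorem exists_summable_norm_epsteinTerm_le (hs : 1 < s.re) (A : ℝ) {B : ℝ} (hB : 0 < B) :
    ∃ b : ℤ × ℤ → ℝ, Summable b ∧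
      ∀ z : ℂ, |z.re| ≤ A → B ≤ z.im → ∀ p, ‖epsteinTerm s z p‖ ≤ b p := by
  refine ⟨fun p => EisensteinSeries.r ⟨⟨A, B⟩, hB⟩ ^ (-(2 * s.re)) * ‖![p.1, p.2]‖ ^ (-(2 * s.re)),
    Summable.mul_left _ ?_, fun z hA hz p => ?_⟩
  · exact (finTwoArrowEquiv ℤ).symm.summable_iff.2
      (EisensteinSeries.summable_one_div_norm_rpow (k := 2 * s.re) (by linarith))
  · have hre : (-(2 * s)).re = -(2 * s.re) := by simp
    rw [epsteinTerm, norm_cpow_eq_rpow_re_of_nonneg (norm_nonneg _) (by linarith), hre]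
    exact EisensteinSeries.summand_bound_of_mem_verticalStrip (z := ⟨z, hB.trans_le hz⟩)
      (by linarith) ![p.1, p.2] hB ⟨hA, hz⟩

theorem summable_epsteinTerm (hs : 1 < s.re) (hz : 0 < z.im) : Summable (epsteinTerm s z) := by
  obtain ⟨b, hb, hle⟩ := exists_summable_norm_epsteinTerm_le hs |z.re| hz
  exact hb.of_norm_bounded (hle z le_rfl le_rfl)

theorem eisenstein_eq_tsum_primitivePair (s z : ℂ) :
    eisenstein s z = (1 / 2) * ((z.im : ℂ) ^ s * ∑' p : PrimitivePair, epsteinTerm s z p) := by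
  rw [eisenstein]
  congr 1
  rw [← tsum_mul_left]
  refine Eq.trans ?_ (tsum_subtype {p : ℤ × ℤ | Int.gcd p.1 p.2 = 1}
    fun p => (z.im : ℂ) ^ s * epsteinTerm s z p).symm
  simp only [Set.indicator_apply, Set.mem_ofPred_eq, epsteinTerm, cpow_neg, div_eq_mul_inv]

theorem riemannZeta_mul_eisenstein (hs : 1 < s.re) (hz : 0 < z.im) :
    riemannZeta (2 * s) * eisenstein s z =
      (1 / 2) * ((z.im : ℂ) ^ s * ∑' p, epsteinTerm s z p) := by
  have hw : 1 < (2 * s).re := by simpa using (by linarith : 1 < 2 * s.re)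
  rw [eisenstein_eq_tsum_primitivePair, ← riemannZeta_mul_tsum_primitivePair hw
    (summable_epsteinTerm hs hz) fun n p => epsteinTerm_nsmul s z n p]
  ring

theorem hasSum_intervalIntegral_epsteinTerm (hs : 1 < s.re) (hy : 0 < y) (a b : ℝ) :
    HasSum (fun p => ∫ x in a..b, epsteinTerm s (x + y * I) p)
      (∫ x in a..b, ∑' p, epsteinTerm s (x + y * I) p) := by
  obtain ⟨B, hB, hle⟩ := exists_summable_norm_epsteinTerm_le hs (max |min a b| |max a b|) hy
  have hbound (p : ℤ × ℤ) (x : ℝ) (hx : x ∈ Set.uIoc a b) :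
      ‖epsteinTerm s (x + y * I) p‖ ≤ B p := by
    refine hle _ ?_ (by simp) p
    simpa using abs_le_max_abs_abs hx.1.le hx.2
  refine intervalIntegral.hasSum_integral_of_dominated_convergence (fun p _ => B p)
    (fun p => ?_) (fun p => .of_forall (hbound p)) (.of_forall fun _ _ => hB) (by simp)
    (.of_forall fun x _ => (summable_epsteinTerm hs (by simpa using hy)).hasSum)
  have := measurable_epsteinTerm s p
  exact Measurable.aestronglyMeasurable (by fun_prop)

theorem hasSum_row_intervalIntegral_epsteinTerm (hs : 1 / 2 < s.re) (hy : 0 < y) {n : ℕ}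
    (hn : n ≠ 0) :
    HasSum (fun d : ℤ => ∫ x in (0 : ℝ)..1, epsteinTerm s (x + y * I) (n, d))
      ((n : ℂ) ^ (-(2 * s - 1)) * ((Real.sqrt Real.pi : ℂ) *
        (Complex.Gamma (s - 1 / 2) / Complex.Gamma s) * (y : ℂ) ^ (1 - 2 * s))) := by
  have hny : 0 < n * y := by positivity
  have hint : Integrable fun u : ℝ => (((n * y) ^ 2 + ‖u‖ ^ 2 : ℝ) : ℂ) ^ (-s) :=
    integrable_add_norm_sq_cpow_neg (sq_pos_of_pos hny) (by simpa using hs)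
  have hrow := hasSum_intervalIntegral_comp_natCast_mul_add hint hn
  rw [integral_sq_add_sq_cpow_neg hny hs, ofReal_mul,
    mul_cpow_ofReal_nonneg n.cast_nonneg hy.le, mul_left_comm, ofReal_natCast,
    ← neg_sub (2 * s) 1] at hrow
  simpa only [epsteinTerm_eq_add_norm_sq_cpow, neg_sub, Int.cast_natCast] using hrow

theorem riemannZeta_two_mul_ne_zero (hs : 1 / 2 < s.re) : riemannZeta (2 * s) ≠ 0 :=
  riemannZeta_ne_zero_of_one_le_re <| by simpa using (by linarith : 1 ≤ 2 * s.re)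

theorem tsum_epsteinTerm_row_zero (hs : 1 / 2 < s.re) (z : ℂ) :
    ∑' d : ℤ, epsteinTerm s z (0, d) = 2 * riemannZeta (2 * s) := by
  have hw : 1 < (2 * s).re := by simpa using (by linarith : 1 < 2 * s.re)
  have hs₀ : s ≠ 0 := by
    rintro rfl
    norm_num at hs
  have heven : (fun d : ℤ => epsteinTerm s z (0, d)).Even := fun d => by
    simpa using epsteinTerm_neg s z (0, d)
  have hnat : Summable fun n : ℕ => epsteinTerm s z (0, n) := by
    simpa only [epsteinTerm_zero_natCast, cpow_neg, one_div] using summable_one_div_nat_cpow.2 hw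
  have hsum : Summable fun d : ℤ => epsteinTerm s z (0, d) :=
    hnat.of_nat_of_neg (by simpa only [heven _] using hnat)
  rw [tsum_int_eq_zero_add_two_mul_tsum_pnat heven hsum]
  simp only [epsteinTerm_zero_natCast, tsum_pnat_cpow_neg_eq_riemannZeta hw]
  rw [← Prod.zero_eq_mk, epsteinTerm_zero hs₀, zero_add, nsmul_eq_mul,
    Nat.cast_ofNat]

theorem intervalIntegral_epsteinTerm_row_zero (s : ℂ) (y : ℝ) (d : ℤ) :
    ∫ x in (0 : ℝ)..1, epsteinTerm s (x + y * I) (0, d) = epsteinTerm s 0 (0, d) := by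
  simp [epsteinTerm]

theorem tsum_intervalIntegral_epsteinTerm (hs : 1 < s.re) (hy : 0 < y) :
    ∑' p, ∫ x in (0 : ℝ)..1, epsteinTerm s (x + y * I) p =
      2 * (riemannZeta (2 * s) * (1 + phiHat s * (y : ℂ) ^ (1 - 2 * s))) := by
  have hw : 1 < (2 * s - 1).re := by simpa using (by linarith : 1 < 2 * s.re - 1)
  have hs₀ : 1 / 2 < s.re := by linarith
  have hζ := riemannZeta_two_mul_ne_zero hs₀
  have hsum := (hasSum_intervalIntegral_epsteinTerm hs hy 0 1).summable
  have heven : (fun c : ℤ => ∑' d : ℤ,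
      ∫ x in (0 : ℝ)..1, epsteinTerm s (x + y * I) (c, d)).Even := fun c => by
    simp only
    rw [← tsum_comp_neg]
    simp only [← Prod.neg_mk, epsteinTerm_neg]
  have hrow (n : ℕ+) := (hasSum_row_intervalIntegral_epsteinTerm hs₀ hy n.ne_zero).tsum_eq
  rw [hsum.tsum_prod, tsum_int_eq_zero_add_two_mul_tsum_pnat heven hsum.prod]
  simp only [intervalIntegral_epsteinTerm_row_zero, tsum_epsteinTerm_row_zero hs₀, hrow,
    tsum_mul_right, tsum_pnat_cpow_neg_eq_riemannZeta hw, nsmul_eq_mul, Nat.cast_ofNat, phiHat]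
  field_simp

theorem riemannZeta_mul_intervalIntegral_eisenstein (hs : 1 < s.re) (hy : 0 < y) (a b : ℝ) :
    riemannZeta (2 * s) * ∫ x in a..b, eisenstein s (x + y * I) =
      (1 / 2) * ((y : ℂ) ^ s * ∑' p, ∫ x in a..b, epsteinTerm s (x + y * I) p) := by
  rw [(hasSum_intervalIntegral_epsteinTerm hs hy a b).tsum_eq]
  simp only [← intervalIntegral.integral_const_mul]
  refine intervalIntegral.integral_congr fun x _ => ?_
  simpa using riemannZeta_mul_eisenstein (z := x + y * I) hs (by simpa using hy)

end Epstein

/-- The constant Fourier coefficient of the Eisenstein series: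
`∫₀¹ E(s, x + iy) dx = y^s + φ̂(s) y^{1−s}` for `Re s > 1`, `y > 0`. -/
theorem eisenstein_constant_coeff (s : ℂ) (hs : 1 < s.re) (y : ℝ) (hy : 0 < y) :
    ∫ x in (0 : ℝ)..1, eisenstein s ((x : ℂ) + y * Complex.I) =
      (y : ℂ) ^ s + phiHat s * (y : ℂ) ^ (1 - s) := by
  have hy₀ : (y : ℂ) ≠ 0 := ofReal_ne_zero.2 hy.ne'
  refine mul_left_cancel₀ (riemannZeta_two_mul_ne_zero (by linarith : 1 / 2 < s.re)) ?_
  calc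
    riemannZeta (2 * s) * ∫ x in (0 : ℝ)..1, eisenstein s (x + y * I)
      = (1 / 2) * ((y : ℂ) ^ s * ∑' p, ∫ x in (0 : ℝ)..1, epsteinTerm s (x + y * I) p) :=
        riemannZeta_mul_intervalIntegral_eisenstein hs hy 0 1
    _ = riemannZeta (2 * s) *
          ((y : ℂ) ^ s + phiHat s * ((y : ℂ) ^ s * (y : ℂ) ^ (1 - 2 * s))) := by
        rw [tsum_intervalIntegral_epsteinTerm hs hy]
        ring
    _ = riemannZeta (2 * s) * ((y : ℂ) ^ s + phiHat s * (y : ℂ) ^ (1 - s)) := by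
        rw [← cpow_add _ _ hy₀]
        ring_nf
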